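/- Let η ∈ [0,1]. For every pair of real numbers Ω ≥ 0 and δ ≥ 0, there exist real numbers α ∈ [0,1] and β ≥ 0 with α + β ≥ η such that Ω = √((1−α)·β·(1−η+α+β)) and δ = √(α·(1+β)·(α+β−η)). -/

import Mathlib

lemma aux_12 (η : ℝ) (h0 : 0 ≤ η) (h1 : η ≤ 1) (A B : ℝ) (hA : 0 ≤ A) (hB : 0 ≤ B) :
    ∃ α β : ℝ, α ∈ Set.Icc (0 : ℝ) 1 ∧ 0 ≤ β ∧ η ≤ α + β ∧
      (1 - α) * β * (1 - η + α + β) = A ∧ α * (1 + β) * (α + β - η) = B := by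
  rcases hA.eq_or_lt with rfl | hA
  · rcases le_total B (1 - η) with hb | hb
    · have hc : ContinuousOn (fun x : ℝ => x * (x - η)) (Set.Icc η 1) := by fun_prop
      obtain ⟨x, hx, hxe⟩ := intermediate_value_Icc h1 hc
        (show B ∈ Set.Icc _ _ from ⟨by simpa using hB, by simpa using hb⟩)
      refine ⟨x, 0, ⟨h0.trans hx.1, hx.2⟩, le_rfl, by linarith [hx.1], by ring, ?_⟩
      simp only at hxe
      linarith
    · have hc : ContinuousOn (fun x : ℝ => (1 + x) * (1 + x - η)) (Set.Icc 0 B) := by fun_prop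
      obtain ⟨x, hx, hxe⟩ := intermediate_value_Icc hB hc
        (show B ∈ Set.Icc _ _ from ⟨by simpa using hb, by
          nlinarith [mul_nonneg hB (sub_nonneg.2 h1), mul_nonneg hB hB]⟩)
      refine ⟨1, x, ⟨zero_le_one, le_rfl⟩, hx.1, by linarith [hx.1], by ring, ?_⟩
      simp only at hxe
      linarith
  obtain ⟨M, hM⟩ : ∃ M : ℝ, M = 1 + 2 * B := ⟨_, rfl⟩
  have hM1 : 1 ≤ M := by linarith
  obtain ⟨e, he0, he1, he2⟩ : ∃ e : ℝ, 0 < e ∧ e ≤ 1 / 2 ∧ e * (M * (2 + M)) ≤ A := by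
    have hp : 0 < M * (2 + M) := by positivity
    refine ⟨min (1 / 2) (A / (M * (2 + M))), by positivity, min_le_left _ _, ?_⟩
    rw [← le_div_iff₀ hp]
    exact min_le_right _ _
  obtain ⟨b, hb⟩ : ∃ b : ℝ → ℝ, b = fun a =>
    (-(1 - η + a) + Real.sqrt ((1 - η + a) ^ 2 + 4 * A / (1 - a))) / 2 := ⟨_, rfl⟩
  have hbc : ContinuousOn b (Set.Icc 0 (1 - e)) := by
    rw [hb]
    have : ContinuousOn (fun a : ℝ => 4 * A / (1 - a)) (Set.Icc 0 (1 - e)) :=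
      ContinuousOn.div (by fun_prop) (by fun_prop) (fun x hx => by
        have := hx.2
        intro h
        linarith)
    fun_prop
  have hbp : ∀ a ∈ Set.Icc 0 (1 - e), 0 ≤ b a ∧ (1 - a) * b a * (1 - η + a + b a) = A := by
    intro a ha
    have ha0 := ha.1
    have ha1 : 0 < 1 - a := by linarith [ha.2]
    have hq : 0 ≤ 4 * A / (1 - a) := by positivity
    have hs := Real.sq_sqrt (show 0 ≤ (1 - η + a) ^ 2 + 4 * A / (1 - a) by positivity)
    have hl : 1 - η + a ≤ Real.sqrt ((1 - η + a) ^ 2 + 4 * A / (1 - a)) :=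
      Real.le_sqrt_of_sq_le (by linarith)
    have hbe : b a = (-(1 - η + a) + Real.sqrt ((1 - η + a) ^ 2 + 4 * A / (1 - a))) / 2 := by
      rw [hb]
    generalize Real.sqrt ((1 - η + a) ^ 2 + 4 * A / (1 - a)) = s at *
    refine ⟨by rw [hbe]; linarith, ?_⟩
    have hq2 : (1 - a) * (4 * A / (1 - a)) = 4 * A := by field_simp
    rw [hbe]
    linear_combination (1 - a) / 4 * hs + hq2 / 4
  have hmem : (1 - e) ∈ Set.Icc 0 (1 - e) := ⟨by linarith, le_rfl⟩
  have hmem0 : (0 : ℝ) ∈ Set.Icc 0 (1 - e) := ⟨le_rfl, by linarith⟩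
  have hbM : M ≤ b (1 - e) := by
    obtain ⟨h2, h3⟩ := hbp _ hmem
    by_contra! hlt
    have : b (1 - e) * (1 - η + (1 - e) + b (1 - e)) < M * (2 + M) :=
      mul_lt_mul'' hlt (by linarith) h2 (by linarith)
    nlinarith
  rcases hB.eq_or_lt with hB0 | hB0
  · rcases le_total η (b 0) with h | h
    · exact ⟨0, b 0, ⟨le_rfl, zero_le_one⟩, (hbp 0 hmem0).1, by linarith, (hbp 0 hmem0).2,
        by rw [← hB0]; ring⟩
    · have hc : ContinuousOn (fun a => a + b a) (Set.Icc 0 (1 - e)) := by fun_prop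
      obtain ⟨x, hx, hxe⟩ := intermediate_value_Icc hmem0.2 hc
        (show η ∈ Set.Icc _ _ from ⟨by simpa using h, by linarith⟩)
      simp only at hxe
      exact ⟨x, b x, ⟨hx.1, by linarith [hx.2]⟩, (hbp x hx).1, hxe.ge, (hbp x hx).2,
        by rw [hxe, ← hB0]; ring⟩
  · have hc : ContinuousOn (fun a => a * (1 + b a) * (a + b a - η)) (Set.Icc 0 (1 - e)) := by
      fun_prop
    obtain ⟨x, hx, hxe⟩ := intermediate_value_Icc hmem0.2 hc
      (show B ∈ Set.Icc _ _ from ⟨by simpa using hB, by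
        have t1 : 1 / 2 * (1 + M) ≤ (1 - e) * (1 + b (1 - e)) :=
          mul_le_mul (by linarith) (by linarith) (by linarith) (by linarith)
        have t2 : (1 / 2 * (1 + M)) * (M - 1 / 2) ≤
            ((1 - e) * (1 + b (1 - e))) * (1 - e + b (1 - e) - η) :=
          mul_le_mul t1 (by linarith) (by linarith) (by linarith)
        subst hM
        nlinarith⟩)
    simp only at hxe
    refine ⟨x, b x, ⟨hx.1, by linarith [hx.2]⟩, (hbp x hx).1, ?_, (hbp x hx).2, hxe⟩
    by_contra! hlt
    have := mul_nonneg (mul_nonneg hx.1 (show 0 ≤ 1 + b x by linarith [(hbp x hx).1]))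
      (show 0 ≤ η - (x + b x) by linarith)
    nlinarith

/-- the reparameterization `(α,β) ↦ (Ω,δ)` is surjective onto the
nonnegative quadrant. -/
theorem stmt_12 (η : ℝ) (hη : η ∈ Set.Icc (0 : ℝ) 1) (Ω δ : ℝ) (hΩ : 0 ≤ Ω) (hδ : 0 ≤ δ) :
    ∃ α β : ℝ, α ∈ Set.Icc (0 : ℝ) 1 ∧ 0 ≤ β ∧ η ≤ α + β ∧
      Ω = Real.sqrt ((1 - α) * β * (1 - η + α + β)) ∧
      δ = Real.sqrt (α * (1 + β) * (α + β - η)) := by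
  obtain ⟨α, β, h1, h2, h3, h4, h5⟩ :=
    aux_12 η hη.1 hη.2 (Ω ^ 2) (δ ^ 2) (sq_nonneg _) (sq_nonneg _)
  refine ⟨α, β, h1, h2, h3, ?_, ?_⟩
  · rw [h4, Real.sqrt_sq hΩ]
  · rw [h5, Real.sqrt_sq hδ]
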